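/- Assume B is bounded below on the closure of R(D) and that H = N(D) ⊕ closure(R(BD)) as a topological direct sum. Then H = N(D*B*) ⊕ closure(R(D*)) as a topological direct sum, where N(D*B*) = {u ∈ H : B*u ∈ N(D*)}. -/

import Mathlib

noncomputable section

variable {X : Type*} [NormedAddCommGroup X] [NormedSpace ℂ X]

/-- A complex normed space is reflexive if the canonical inclusion into its double dual is
surjective. -/
def ReflexiveSpace (X : Type*) [NormedAddCommGroup X] [NormedSpace ℂ X] : Prop :=
  Function.Surjective (NormedSpace.inclusionInDoubleDual ℂ X)

/-- The open bisector `S_ω = {z ≠ 0 : |arg z| < ω or |arg (-z)| < ω}`. -/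
def Sector (ω : ℝ) : Set ℂ :=
  {z | z ≠ 0 ∧ (|Complex.arg z| < ω ∨ |Complex.arg (-z)| < ω)}

/-- The kernel of a partially defined operator, viewed as a subspace of the ambient space. -/
def pker (A : X →ₗ.[ℂ] X) : Submodule ℂ X :=
  (LinearMap.ker A.toFun).map A.domain.subtype

/-- The range of a partially defined operator. -/
def pran (A : X →ₗ.[ℂ] X) : Submodule ℂ X :=
  LinearMap.range A.toFun

/-- `X = N ⊕ M` as a topological direct sum: `N` and `M` are closed complementary subspaces. -/
def IsTopDirectSum (N M : Submodule ℂ X) : Prop :=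
  IsClosed (N : Set X) ∧ IsClosed (M : Set X) ∧ N ⊓ M = ⊥ ∧ N ⊔ M = ⊤

/-- `A` kernel/range decomposes: `X = N(A) ⊕ closure (R(A))` as a topological direct sum. -/
def KerRanDecomp (A : X →ₗ.[ℂ] X) : Prop :=
  IsTopDirectSum (pker A) (pran A).topologicalClosure

/-- A closed operator `A` is bisectorial of angle `ω` if for every `ω' ∈ (ω, π/2)` there is
`C > 0` such that for every `λ ∉ S_{ω'}` the map `I + λA : D(A) → X` is a bijection whose
inverse is bounded with norm at most `C`. -/
def IsBisectorial (A : X →ₗ.[ℂ] X) (ω : ℝ) : Prop :=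
  A.IsClosed ∧
    ∀ ω' ∈ Set.Ioo ω (Real.pi / 2), ∃ C > 0, ∀ lam : ℂ, lam ∉ Sector ω' →
      Function.Bijective (fun u : A.domain => (u : X) + lam • A u) ∧
        ∀ u : A.domain, ‖(u : X)‖ ≤ C * ‖(u : X) + lam • A u‖

/-- The operator `BD`, with domain `D(D)`, acting by `u ↦ B (D u)`. -/
def opBD (B : X →L[ℂ] X) (D : X →ₗ.[ℂ] X) : X →ₗ.[ℂ] X :=
  ⟨D.domain, (B : X →ₗ[ℂ] X).comp D.toFun⟩

/-- The operator `DB`, with domain `{u : B u ∈ D(D)}`, acting by `u ↦ D (B u)`. -/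
def opDB (B : X →L[ℂ] X) (D : X →ₗ.[ℂ] X) : X →ₗ.[ℂ] X :=
  ⟨D.domain.comap (B : X →ₗ[ℂ] X),
    D.toFun.comp ((B : X →ₗ[ℂ] X).restrict fun _ hx => hx)⟩

/-- `B` is bounded below on the set `S`. -/
def BoundedBelowOn (B : X →L[ℂ] X) (S : Set X) : Prop :=
  ∃ c > 0, ∀ u ∈ S, c * ‖u‖ ≤ ‖B u‖

/-! Taking orthogonal complements turns a topological splitting `H = N ⊕ M` into
`H = Mᗮ ⊕ Nᗮ`: the adjoint of the projection onto `N` along `M` is the projection onto `Mᗮ`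
along `Nᗮ`. For `N = N(D)` and `M = closure R(BD)` one has `Nᗮ = closure R(D*)` and
`Mᗮ = N(D*B*)`. Kernel and range of an operator are the slice `{x | (x, 0) ∈ g}` and the second
projection of its graph `g`, so the relations between kernels and ranges of `D` and `D*` reduce to
a single statement on linear relations, applied to the graph of `D` and to its adjoint. -/

open LinearMap (snd inl)
open scoped InnerProduct InnerProductSpace

section RCLike

variable {𝕜 E F : Type*} [RCLike 𝕜]
variable [NormedAddCommGroup E] [InnerProductSpace 𝕜 E]
variable [NormedAddCommGroup F] [InnerProductSpace 𝕜 F]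

theorem isTopCompl_orthogonal_orthogonal [CompleteSpace E] {N M : Submodule 𝕜 E}
    (h : N.IsTopCompl M) : Mᗮ.IsTopCompl Nᗮ := by
  let P : E →L[𝕜] E := N.projectionL M h
  have adjoint_compl : Submodule.IsTopCompl (P†).range (P†).ker :=
    ContinuousLinearMap.IsIdempotentElem.isTopCompl
      (Submodule.isIdempotentElem_projectionL h).star
  have ker_adjoint : (P†).ker = Nᗮ := by
    rw [← P.orthogonal_range, Submodule.range_projectionL]
  have range_adjoint : (P†).range = Mᗮ := by
    rw [← adjoint_compl.isClosed.submodule_topologicalClosure_eq, ← P.orthogonal_ker,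
      Submodule.ker_projectionL]
  rwa [ker_adjoint, range_adjoint] at adjoint_compl

theorem orthogonal_map_eq_comap_adjoint [CompleteSpace E] [CompleteSpace F] (B : E →L[𝕜] F)
    (K : Submodule 𝕜 E) : (K.map (B : E →ₗ[𝕜] F))ᗮ = Kᗮ.comap (B† : F →ₗ[𝕜] E) := by
  ext y
  simp [Submodule.mem_orthogonal, ContinuousLinearMap.adjoint_inner_right]

section LinearRelation

variable (g : Submodule 𝕜 (E × F))

theorem orthogonal_map_snd_eq_comap_inl_adjoint :
    (g.map (snd 𝕜 E F))ᗮ = g.adjoint.comap (inl 𝕜 F E) := by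
  ext y
  simp only [Submodule.mem_orthogonal, Submodule.mem_map, Submodule.mem_comap,
    Submodule.mem_adjoint_iff, Prod.exists, LinearMap.snd_apply, LinearMap.inl_apply,
    inner_zero_right, sub_zero, exists_eq_right, forall_exists_index]
  exact forall_comm

theorem mem_adjoint_iff_toLp_mem_orthogonal (v : F) (w : E) :
    (v, w) ∈ g.adjoint ↔
      WithLp.toLp 2 (w, -v) ∈
        (g.comap (WithLp.prodContinuousLinearEquiv 2 𝕜 E F).toLinearMap)ᗮ := by
  rw [Submodule.mem_adjoint_iff, Submodule.mem_orthogonal]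
  constructor
  · intro h z hz
    rw [WithLp.prod_inner_apply, inner_neg_right, ← sub_eq_add_neg, ← neg_sub, neg_eq_zero]
    exact h _ _ hz
  · intro h a b hab
    have := h (WithLp.toLp 2 (a, b)) hab
    rwa [WithLp.prod_inner_apply, inner_neg_right, ← sub_eq_add_neg, ← neg_sub, neg_eq_zero] at this

theorem mem_adjoint_adjoint_iff_toLp_mem_orthogonal_orthogonal (x : E) (y : F) :
    (x, y) ∈ g.adjoint.adjoint ↔
      WithLp.toLp 2 (x, y) ∈
        (g.comap (WithLp.prodContinuousLinearEquiv 2 𝕜 E F).toLinearMap)ᗮᗮ := by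
  rw [Submodule.mem_adjoint_iff, Submodule.mem_orthogonal]
  simp only [mem_adjoint_iff_toLp_mem_orthogonal]
  constructor
  · intro h z hz
    have := h (-z.snd) z.fst (by rwa [neg_neg])
    simpa [WithLp.prod_inner_apply] using this
  · intro h v w hvw
    simpa [WithLp.prod_inner_apply, ← sub_eq_add_neg] using h _ hvw

theorem adjoint_adjoint_eq_topologicalClosure [CompleteSpace E] [CompleteSpace F] :
    g.adjoint.adjoint = g.topologicalClosure := by
  ext ⟨x, y⟩
  rw [mem_adjoint_adjoint_iff_toLp_mem_orthogonal_orthogonal,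
    Submodule.orthogonal_orthogonal_eq_closure]
  have := (WithLp.prodContinuousLinearEquiv 2 𝕜 E F).preimage_closure (g : Set (E × F))
  exact (Set.ext_iff.1 this (WithLp.toLp 2 (x, y))).symm

end LinearRelation

end RCLike

theorem isTopDirectSum_iff_isTopCompl [CompleteSpace X] {N M : Submodule ℂ X} :
    IsTopDirectSum N M ↔ N.IsTopCompl M := by
  rw [Submodule.isTopCompl_iff_isCompl_isClosed, isCompl_iff, disjoint_iff, codisjoint_iff,
    IsTopDirectSum]
  tauto

theorem pker_eq_comap_inl_graph (A : X →ₗ.[ℂ] X) : pker A = A.graph.comap (inl ℂ X X) := by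
  ext x
  simp [pker]

theorem pran_eq_map_snd_graph (A : X →ₗ.[ℂ] X) : pran A = A.graph.map (snd ℂ X X) :=
  A.graph_map_snd_eq_range.symm

theorem pker_opDB (B : X →L[ℂ] X) (A : X →ₗ.[ℂ] X) :
    pker (opDB B A) = (pker A).comap (B : X →ₗ[ℂ] X) := by
  ext x
  simp only [pker_eq_comap_inl_graph, Submodule.mem_comap, LinearMap.inl_apply,
    LinearPMap.mem_graph_iff]
  constructor
  · rintro ⟨⟨x, hBx⟩, rfl, hABx⟩
    exact ⟨⟨B x, hBx⟩, rfl, hABx⟩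
  · rintro ⟨⟨_, hBx⟩, rfl, hABx⟩
    exact ⟨⟨x, hBx⟩, rfl, hABx⟩

theorem pran_opBD (B : X →L[ℂ] X) (D : X →ₗ.[ℂ] X) :
    pran (opBD B D) = (pran D).map (B : X →ₗ[ℂ] X) :=
  LinearMap.range_comp _ _

section Adjoint

variable {H : Type*} [NormedAddCommGroup H] [InnerProductSpace ℂ H] [CompleteSpace H]
  {D : H →ₗ.[ℂ] H}

theorem orthogonal_pran (hdense : Dense (D.domain : Set H)) : (pran D)ᗮ = pker D.adjoint := by
  rw [pran_eq_map_snd_graph, orthogonal_map_snd_eq_comap_inl_adjoint,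
    ← LinearPMap.adjoint_graph_eq_graph_adjoint hdense, pker_eq_comap_inl_graph]

theorem orthogonal_pran_adjoint (hD : D.IsClosed) (hdense : Dense (D.domain : Set H)) :
    (pran D.adjoint)ᗮ = pker D := by
  have graph_closed : D.graph.topologicalClosure = D.graph :=
    IsClosed.submodule_topologicalClosure_eq hD
  rw [pran_eq_map_snd_graph, orthogonal_map_snd_eq_comap_inl_adjoint,
    LinearPMap.adjoint_graph_eq_graph_adjoint hdense, adjoint_adjoint_eq_topologicalClosure,
    graph_closed, pker_eq_comap_inl_graph]

theorem orthogonal_pran_opBD (hdense : Dense (D.domain : Set H)) (B : H →L[ℂ] H) :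
    (pran (opBD B D))ᗮ = pker (opDB (B†) D.adjoint) := by
  rw [pran_opBD, orthogonal_map_eq_comap_adjoint, orthogonal_pran hdense, pker_opDB]

theorem orthogonal_pker (hD : D.IsClosed) (hdense : Dense (D.domain : Set H)) :
    (pker D)ᗮ = (pran D.adjoint).topologicalClosure := by
  rw [← orthogonal_pran_adjoint hD hdense, Submodule.orthogonal_orthogonal_eq_closure]

end Adjoint

theorem stmt_8_general {H : Type*} [NormedAddCommGroup H] [InnerProductSpace ℂ H]
    [CompleteSpace H] (D : H →ₗ.[ℂ] H) (hD : D.IsClosed) (hdense : Dense (D.domain : Set H))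
    (B : H →L[ℂ] H)
    (hsplit : IsTopDirectSum (pker D) (pran (opBD B D)).topologicalClosure) :
    pker (opDB (ContinuousLinearMap.adjoint B) D.adjoint)
      = (pker D.adjoint).comap (ContinuousLinearMap.adjoint B : H →ₗ[ℂ] H) ∧
    IsTopDirectSum (pker (opDB (ContinuousLinearMap.adjoint B) D.adjoint))
      (pran D.adjoint).topologicalClosure := by
  refine ⟨pker_opDB _ _, ?_⟩
  rw [isTopDirectSum_iff_isTopCompl] at hsplit ⊢
  rw [← orthogonal_pran_opBD hdense, ← orthogonal_pker hD hdense, ← Submodule.orthogonal_closure]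
  exact isTopCompl_orthogonal_orthogonal hsplit

/-- (Hilbert space.) If `B` is bounded below on the closure of `R(D)` and
`H = N(D) ⊕ closure (R(BD))` as a topological direct sum, then
`H = N(D*B*) ⊕ closure (R(D*))` as a topological direct sum, where
`N(D*B*) = {u : B* u ∈ N(D*)}`. -/
theorem stmt_8 {H : Type*} [NormedAddCommGroup H] [InnerProductSpace ℂ H] [CompleteSpace H]
    (D : H →ₗ.[ℂ] H) (hD : D.IsClosed) (hdense : Dense (D.domain : Set H)) (B : H →L[ℂ] H)
    (hlow : BoundedBelowOn B ((pran D).topologicalClosure : Set H))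
    (hsplit : IsTopDirectSum (pker D) (pran (opBD B D)).topologicalClosure) :
    pker (opDB (ContinuousLinearMap.adjoint B) D.adjoint)
      = (pker D.adjoint).comap (ContinuousLinearMap.adjoint B : H →ₗ[ℂ] H) ∧
    IsTopDirectSum (pker (opDB (ContinuousLinearMap.adjoint B) D.adjoint))
      (pran D.adjoint).topologicalClosure :=
  stmt_8_general D hD hdense B hsplit
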